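/- If A, B ∈ SL(2,F_7) generate SL(2,F_7) (i.e. ⟨A,B⟩ = SL(2,F_7)) and A³, B³ ∈ {I, −I}, then tr([A,B]) ∉ {3, −3}. -/

import Mathlib

instance : Fact (Nat.Prime 7) := ⟨by norm_num⟩

/-- `SL(2,F)` -/
abbrev SL2 (F : Type) [Field F] : Type := Matrix.SpecialLinearGroup (Fin 2) F

/-!
Write `x = tr A`, `y = tr B`, `z = tr AB`. The Cayley–Hamilton theorem gives
`A³ = (x² - 1) A - x I`, so if `A³` commutes with `B`, then `x² = 1` or `A` itself commutes with
`B`; likewise with the roles exchanged. If `A` and `B` commute, then `4 tr [A, B] + 1 = 3²`.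
Otherwise `x² = y² = 1`, and Fricke's identity `tr [A, B] = x² + y² + z² - xyz - 2` gives
`4 tr [A, B] + 1 = (2z - xy)²`. Thus `4 tr [A, B] + 1` is always a square, whereas neither
`4 · 3 + 1 = 13` nor `4 · (-3) + 1 = -11` is a square modulo `7`.
-/

open scoped MatrixGroups

namespace SL2

variable {R : Type*} [CommRing R]

theorem coe_inv_eq_trace_smul_one_sub (A : SL(2, R)) :
    (A⁻¹).val = A.val.trace • 1 - A.val := by
  ext i j
  fin_cases i <;> fin_cases j <;>
    simp [Matrix.SpecialLinearGroup.coe_inv, Matrix.adjugate_fin_two, Matrix.trace_fin_two]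

theorem trace_inv_mul (A B : SL(2, R)) :
    (A⁻¹ * B).val.trace = A.val.trace * B.val.trace - (A * B).val.trace := by
  simp only [Matrix.SpecialLinearGroup.coe_mul, coe_inv_eq_trace_smul_one_sub, sub_mul,
    smul_mul_assoc, one_mul, Matrix.trace_sub, Matrix.trace_smul, smul_eq_mul]

theorem trace_mul_comm (A B : SL(2, R)) : (A * B).val.trace = (B * A).val.trace := by
  simp only [Matrix.SpecialLinearGroup.coe_mul, Matrix.trace_mul_comm A.val]

theorem trace_self_mul_mul (A B : SL(2, R)) :
    (A * (A * B)).val.trace = A.val.trace * (A * B).val.trace - B.val.trace := by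
  have h := trace_inv_mul A (A * B)
  rw [inv_mul_cancel_left] at h
  linear_combination h

theorem trace_mul_self (A : SL(2, R)) : (A * A).val.trace = A.val.trace ^ 2 - 2 := by
  simpa [sq] using trace_self_mul_mul A 1

theorem trace_commutator (A B : SL(2, R)) :
    (A⁻¹ * B⁻¹ * A * B).val.trace =
      A.val.trace ^ 2 + B.val.trace ^ 2 + (A * B).val.trace ^ 2
        - A.val.trace * B.val.trace * (A * B).val.trace - 2 := by
  have trace_conj : (B⁻¹ * A * B).val.trace = A.val.trace := by
    rw [mul_assoc, trace_mul_comm, mul_inv_cancel_right]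
  calc (A⁻¹ * B⁻¹ * A * B).val.trace
    _ = A.val.trace ^ 2 - (A * (B⁻¹ * A * B)).val.trace := by
      rw [mul_assoc A⁻¹, mul_assoc A⁻¹, trace_inv_mul, trace_conj, sq]
    _ = A.val.trace ^ 2 - (B⁻¹ * (A * B * A)).val.trace := by
      rw [trace_mul_comm A]
      simp only [mul_assoc]
    _ = A.val.trace ^ 2
          - (B.val.trace * (A * (A * B)).val.trace - ((A * B) * (A * B)).val.trace) := by
      rw [trace_inv_mul, trace_mul_comm (A * B) A, mul_assoc A B A, trace_mul_comm B,
        mul_assoc A (B * A), mul_assoc B, ← mul_assoc A B]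
    _ = _ := by
      rw [trace_self_mul_mul, trace_mul_self]
      ring

theorem coe_pow_three (A : SL(2, R)) :
    (A ^ 3).val = (A.val.trace ^ 2 - 1) • A.val - A.val.trace • 1 := by
  have sq_eq : A.val * A.val = A.val.trace • A.val - 1 := by
    have h := congrArg Subtype.val (inv_mul_cancel A)
    rw [Matrix.SpecialLinearGroup.coe_mul, coe_inv_eq_trace_smul_one_sub, sub_mul, smul_mul_assoc,
      one_mul, Matrix.SpecialLinearGroup.coe_one] at h
    rw [← h, sub_sub_cancel]
  rw [Matrix.SpecialLinearGroup.coe_pow, pow_succ, sq, sq_eq, sub_mul, smul_mul_assoc, one_mul,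
    sq_eq]
  module

theorem commute_of_coe_eq_one_or_neg_one {A : SL(2, R)} (h : A.val = 1 ∨ A.val = -1)
    (B : SL(2, R)) : Commute A B := by
  apply Subtype.ext
  rcases h with h | h <;> simp [h]

theorem trace_sq_eq_one_or_commute_of_commute_pow_three [NoZeroDivisors R] {A B : SL(2, R)}
    (h : Commute (A ^ 3) B) : A.val.trace ^ 2 = 1 ∨ Commute A B := by
  have smul_sub_eq_zero :
      (A.val.trace ^ 2 - 1) • (A.val * B.val - B.val * A.val) = 0 := by
    have h := congrArg Subtype.val h.eq
    simp only [Matrix.SpecialLinearGroup.coe_mul, coe_pow_three, sub_mul, mul_sub,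
      smul_mul_assoc, mul_smul_comm, one_mul, mul_one, sub_left_inj] at h
    rw [smul_sub, h, sub_self]
  exact (smul_eq_zero.mp smul_sub_eq_zero).imp sub_eq_zero.mp
    fun h ↦ Subtype.ext (sub_eq_zero.mp h)

theorem isSquare_four_mul_trace_commutator_add_one [NoZeroDivisors R] {A B : SL(2, R)}
    (hA : Commute (A ^ 3) B) (hB : Commute A (B ^ 3)) :
    IsSquare (4 * (A⁻¹ * B⁻¹ * A * B).val.trace + 1) := by
  have of_commute (h : Commute A B) : IsSquare (4 * (A⁻¹ * B⁻¹ * A * B).val.trace + 1) := by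
    have commutator_eq_one : A⁻¹ * B⁻¹ * A * B = 1 := by
      rw [mul_assoc, h.eq]
      group
    refine ⟨3, ?_⟩
    rw [commutator_eq_one, Matrix.SpecialLinearGroup.coe_one, Matrix.trace_one, Fintype.card_fin]
    norm_num
  rcases trace_sq_eq_one_or_commute_of_commute_pow_three hA with hx | h
  · rcases trace_sq_eq_one_or_commute_of_commute_pow_three hB.symm with hy | h
    · refine ⟨2 * (A * B).val.trace - A.val.trace * B.val.trace, ?_⟩
      rw [trace_commutator]
      linear_combination (4 - B.val.trace ^ 2) * hx + 3 * hy
    · exact of_commute h.symm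
  · exact of_commute h

end SL2

theorem stmt13_general {R : Type*} [CommRing R] [NoZeroDivisors R]
    (h13 : ¬ IsSquare (13 : R)) (h11 : ¬ IsSquare (-11 : R)) {A B : SL(2, R)}
    (hA : Commute (A ^ 3) B) (hB : Commute A (B ^ 3)) :
    (A⁻¹ * B⁻¹ * A * B).val.trace ∉ ({3, -3} : Set R) := by
  have square := SL2.isSquare_four_mul_trace_commutator_add_one hA hB
  rintro (h | h) <;> rw [h] at square
  · exact h13 (by convert square using 1; norm_num)
  · exact h11 (by convert square using 1; norm_num)

/-- if `A, B` generate `SL(2,7)` and `A³, B³ ∈ {I, -I}`, then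
`tr([A,B]) ∉ {3, -3}`. -/
theorem stmt13 (A B : SL2 (ZMod 7))
    (hgen : Subgroup.closure {A, B} = ⊤)
    (hA : ((A ^ 3 : SL2 (ZMod 7)) : Matrix (Fin 2) (Fin 2) (ZMod 7)) = 1 ∨
          ((A ^ 3 : SL2 (ZMod 7)) : Matrix (Fin 2) (Fin 2) (ZMod 7)) = -1)
    (hB : ((B ^ 3 : SL2 (ZMod 7)) : Matrix (Fin 2) (Fin 2) (ZMod 7)) = 1 ∨
          ((B ^ 3 : SL2 (ZMod 7)) : Matrix (Fin 2) (Fin 2) (ZMod 7)) = -1) :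
    Matrix.trace ((A⁻¹ * B⁻¹ * A * B : SL2 (ZMod 7)) : Matrix (Fin 2) (Fin 2) (ZMod 7)) ∉
      ({3, -3} : Set (ZMod 7)) :=
  stmt13_general (by decide) (by decide) (SL2.commute_of_coe_eq_one_or_neg_one hA B)
    (SL2.commute_of_coe_eq_one_or_neg_one hB A).symm
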